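/- Let (Ω,F,P) be a probability space, (E,𝓔) a measurable space, (U,𝓤) a standard Borel space. Let Γ : Ω → E and α : Ω → U be random variables, and suppose there exists a random variable V : Ω → ℝ uniform on [0,1] independent of Γ. Then there exists a measurable function a : E × [0,1] → U such that the pair (Γ, a(Γ,V)) has the same joint law as (Γ, α). -/

import Mathlib

/-!
Disintegrate the law of `(Γ, α)` as `law(Γ) ⊗ κ`, with `κ` the regular conditional distribution
`condDistrib α Γ P`, which exists because `U` is standard Borel. The kernel `κ` is then realised by
a single measurable function: there is a measurable `f : E → I → U`, with `I = [0,1]`, such that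
`κ x` is the image of Lebesgue measure on `I` under `f x`
(`Kernel.exists_measurable_map_eq_unitInterval`, a conditional quantile transform).
Extending `f x` to `ℝ` by projecting onto `I` gives `a`. Since `V` is independent of `Γ`, the law of
`(Γ, V)` is a product measure, and Fubini identifies the law of `(Γ, a(Γ, V))` with
`law(Γ) ⊗ κ`.
-/

open MeasureTheory

/-- Transfer / randomization theorem (Kallenberg, Thm 6.10): if `V` is uniform on `[0,1]`
and independent of `Γ`, then for any random variable `α` with values in a standard Borel
space there is a measurable `a : E × [0,1] → U` with `(Γ, a(Γ,V))` distributed as `(Γ,α)`. -/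
theorem stmt_4 {Ω E U : Type*} [MeasurableSpace Ω] [MeasurableSpace E]
    [MeasurableSpace U] [StandardBorelSpace U]
    (P : Measure Ω) [IsProbabilityMeasure P]
    (Γ : Ω → E) (hΓ : Measurable Γ)
    (α : Ω → U) (hα : Measurable α)
    (V : Ω → ℝ) (hV : Measurable V)
    (hVlaw : P.map V = volume.restrict (Set.Icc (0:ℝ) 1))
    (hindep : ProbabilityTheory.IndepFun Γ V P) :
    ∃ a : E → ℝ → U, Measurable (Function.uncurry a) ∧
      P.map (fun ω => (Γ ω, a (Γ ω) (V ω))) = P.map (fun ω => (Γ ω, α ω)) := by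
  -- The probability space is nonempty, hence so is `U`, as `condDistrib` requires.
  have : Nonempty Ω := nonempty_of_isProbabilityMeasure P
  have : Nonempty U := this.map α
  obtain ⟨f, hf, hfκ⟩ :=
    (ProbabilityTheory.condDistrib α Γ P).exists_measurable_map_eq_unitInterval
  let π : ℝ → unitInterval := Set.projIcc 0 1 zero_le_one
  have hπ : Measurable π := continuous_projIcc.measurable
  have hπmap : (P.map V).map π = volume := by
    have hsub : Measurable (Subtype.val : unitInterval → ℝ) := measurable_subtype_coe
    have hcoe : (volume : Measure unitInterval).map Subtype.val
        = volume.restrict (Set.Icc (0:ℝ) 1) := map_comap_subtype_coe measurableSet_Icc _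
    have hid : π ∘ Subtype.val = id := funext fun x => Set.projIcc_val zero_le_one x
    rw [hVlaw, ← hcoe, Measure.map_map hπ hsub, hid, Measure.map_id]
  have ha : Measurable (Function.uncurry fun x v => f x (π v)) :=
    hf.comp (measurable_fst.prodMk (hπ.comp measurable_snd))
  refine ⟨fun x v => f x (π v), ha, ?_⟩
  have : IsProbabilityMeasure (P.map V) := Measure.isProbabilityMeasure_map hV.aemeasurable
  have : IsProbabilityMeasure (P.map Γ) := Measure.isProbabilityMeasure_map hΓ.aemeasurable
  have hprod : P.map (fun ω => (Γ ω, V ω)) = (P.map Γ).prod (P.map V) :=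
    (ProbabilityTheory.indepFun_iff_map_prod_eq_prod_map_map hΓ.aemeasurable
      hV.aemeasurable).1 hindep
  let g : E × ℝ → E × U := fun p => (p.1, f p.1 (π p.2))
  have hg : Measurable g := measurable_fst.prodMk ha
  have hcomp : P.map (fun ω => (Γ ω, f (Γ ω) (π (V ω))))
      = ((P.map Γ).prod (P.map V)).map g := by
    rw [← hprod, Measure.map_map hg (hΓ.prodMk hV)]
    rfl
  rw [hcomp, ← ProbabilityTheory.compProd_map_condDistrib hα.aemeasurable]
  ext s hs
  rw [Measure.map_apply hg hs, Measure.prod_apply (hg hs), Measure.compProd_apply hs]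
  refine lintegral_congr fun x => ?_
  have hfx : Measurable (f x) := hf.comp measurable_prodMk_left
  have hsx : MeasurableSet (Prod.mk x ⁻¹' s) := measurable_prodMk_left hs
  rw [← hfκ x, Measure.map_apply hfx hsx, ← hπmap, Measure.map_apply hπ (hfx hsx)]
  rfl
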